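/- Let m, n ≥ 1. Let A be an m×m real matrix with every row sum and column sum equal to a such that (A - (a/m)•J_m)^k = 0, and let Q be an n×n real matrix with every row sum and column sum equal to q such that (Q - (q/n)•J_n)^k = 0, where J_m and J_n are the all-ones matrices. Define the compound square C = J_n ⊗ A + Q ⊗ J_m, an (n·m)×(n·m) matrix. Then every row sum and every column sum of C equals L = n·a + m·q, and C^k = (L^k/(m·n))•J_{nm}, a constant matrix. In particular C has the one-nonzero-eigenvalue (1EV) property: C - (L/(m·n))•J_{nm} is nilpotent. -/

import Mathlib

open Matrix BigOperators Kronecker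

/-- Powers of a sum of two mutually annihilating elements. -/
lemma aux_add_pow {R : Type*} [Ring R] (X Y : R) (h1 : X * Y = 0) (h2 : Y * X = 0) (k : ℕ) :
    (X + Y) ^ (k + 1) = X ^ (k + 1) + Y ^ (k + 1) := by
  induction k with
  | zero => simp
  | succ k ih =>
    rw [pow_succ, ih, add_mul, mul_add, mul_add, pow_succ X k, pow_succ Y k, mul_assoc _ X Y,
      mul_assoc _ Y X, h1, h2, ← pow_succ X k, ← pow_succ Y k, ← pow_succ, ← pow_succ]
    simp

lemma aux_kron_pow {m n : ℕ} (X : Matrix (Fin n) (Fin n) ℝ) (Y : Matrix (Fin m) (Fin m) ℝ)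
    (k : ℕ) : (X ⊗ₖ Y) ^ k = (X ^ k) ⊗ₖ (Y ^ k) := by
  induction k with
  | zero => simp
  | succ k ih => rw [pow_succ, ih, pow_succ, pow_succ, Matrix.mul_kronecker_mul]

lemma aux_J_pow {ι : Type*} [Fintype ι] [DecidableEq ι] (J : Matrix ι ι ℝ)
    (hJ : J = Matrix.of fun _ _ => (1 : ℝ)) (k : ℕ) :
    J ^ (k + 1) = ((Fintype.card ι : ℝ) ^ k) • J := by
  have h : J * J = (Fintype.card ι : ℝ) • J := by
    subst hJ; ext i j; simp [Matrix.mul_apply]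
  induction k with
  | zero => simp
  | succ k ih => rw [pow_succ, ih, smul_mul_assoc, h, smul_smul, pow_succ]

lemma aux_ann {ι : Type*} [Fintype ι] (c : ℝ) (hc : (Fintype.card ι : ℝ) ≠ 0)
    (A J : Matrix ι ι ℝ) (a : ℝ) (hca : c = a / Fintype.card ι)
    (hJ : J = Matrix.of fun _ _ => (1 : ℝ))
    (hr : ∀ i, ∑ j, A i j = a) (hl : ∀ j, ∑ i, A i j = a) :
    (A - c • J) * J = 0 ∧ J * (A - c • J) = 0 := by
  subst hJ hca
  constructor
  · ext i j
    simp [Matrix.mul_apply, Finset.sum_sub_distrib, hr]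
    field_simp
    simp
  · ext i j
    simp [Matrix.mul_apply, Finset.sum_sub_distrib, hl]
    field_simp
    simp

/-- The compound square `C = J_n ⊗ A + Q ⊗ J_m` of doubly-affine
squares `A` (constant `a`, nilpotent part of index ≤ k) and `Q` (constant `q`,
nilpotent part of index ≤ k) is doubly affine with magic constant
`L = n·a + m·q`, satisfies `C ^ k = (L^k/(m·n)) • J_{nm}`, and has the 1EV
property: `C - (L/(m·n)) • J_{nm}` is nilpotent. -/
theorem compound_square_doubly_affine_1EV {m n k : ℕ} (hm : 1 ≤ m) (hn : 1 ≤ n)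
    (A : Matrix (Fin m) (Fin m) ℝ) (a : ℝ)
    (Q : Matrix (Fin n) (Fin n) ℝ) (q : ℝ)
    (hArow : ∀ i, ∑ j, A i j = a) (hAcol : ∀ j, ∑ i, A i j = a)
    (hQrow : ∀ i, ∑ j, Q i j = q) (hQcol : ∀ j, ∑ i, Q i j = q)
    (Jm : Matrix (Fin m) (Fin m) ℝ) (hJm : Jm = Matrix.of fun _ _ => (1 : ℝ))
    (Jn : Matrix (Fin n) (Fin n) ℝ) (hJn : Jn = Matrix.of fun _ _ => (1 : ℝ))
    (Jnm : Matrix (Fin n × Fin m) (Fin n × Fin m) ℝ)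
    (hJnm : Jnm = Matrix.of fun _ _ => (1 : ℝ))
    (hAnil : (A - (a / m) • Jm) ^ k = 0)
    (hQnil : (Q - (q / n) • Jn) ^ k = 0)
    (C : Matrix (Fin n × Fin m) (Fin n × Fin m) ℝ)
    (hC : C = Jn ⊗ₖ A + Q ⊗ₖ Jm)
    (L : ℝ) (hL : L = n * a + m * q) :
    (∀ i, ∑ j, C i j = L) ∧ (∀ j, ∑ i, C i j = L) ∧
    C ^ k = (L ^ k / (m * n)) • Jnm ∧
    IsNilpotent (C - (L / (m * n)) • Jnm) := by
  have hm0 : (m : ℝ) ≠ 0 := by positivity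
  have hn0 : (n : ℝ) ≠ 0 := by positivity
  have hrow : ∀ i, ∑ j, C i j = L := by
    rintro ⟨i, j⟩
    subst hC hJm hJn hL
    simp [Fintype.sum_prod_type, Finset.sum_add_distrib, hArow, ← Finset.mul_sum, hQrow]
  have hcol : ∀ j, ∑ i, C i j = L := by
    rintro ⟨i, j⟩
    subst hC hJm hJn hL
    simp [Fintype.sum_prod_type, Finset.sum_add_distrib, hAcol, ← Finset.mul_sum, hQcol]
  obtain ⟨k, rfl⟩ : ∃ k', k = k' + 1 := by
    cases k with
    | succ k => exact ⟨k, rfl⟩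
    | zero =>
      have := congrFun (congrFun hAnil ⟨0, hm⟩) ⟨0, hm⟩
      simp at this
  obtain ⟨hA1, hA2⟩ := aux_ann (a / m) (by simpa using hm0) A Jm a (by simp) hJm hArow hAcol
  obtain ⟨hQ1, hQ2⟩ := aux_ann (q / n) (by simpa using hn0) Q Jn q (by simp) hJn hQrow hQcol
  obtain ⟨hC1, hC2⟩ := aux_ann (L / (m * n)) (by simp [hm0, hn0]) C Jnm L
    (by simp [mul_comm]) hJnm hrow hcol
  have hN : C - (L / (m * n)) • Jnm
      = Jn ⊗ₖ (A - (a / m) • Jm) + (Q - (q / n) • Jn) ⊗ₖ Jm := by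
    subst hC hJm hJn hJnm hL
    ext ⟨i, j⟩ ⟨i', j'⟩
    simp
    field_simp
    ring
  have hNk : (C - (L / (m * n)) • Jnm) ^ (k + 1) = 0 := by
    rw [hN, aux_add_pow, aux_kron_pow, aux_kron_pow, hAnil, hQnil]
    · simp
    · rw [← Matrix.mul_kronecker_mul, hA1]; simp
    · rw [← Matrix.mul_kronecker_mul, hA2]; simp
  refine ⟨hrow, hcol, ?_, ⟨k + 1, hNk⟩⟩
  have hsplit : C = (C - (L / (m * n)) • Jnm) + (L / (m * n)) • Jnm := by simp
  rw [hsplit, aux_add_pow _ _ (by rw [mul_smul_comm, hC1, smul_zero])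
    (by rw [smul_mul_assoc, hC2, smul_zero]), hNk, zero_add, smul_pow, aux_J_pow Jnm hJnm,
    smul_smul]
  congr 1
  simp only [Fintype.card_prod, Fintype.card_fin, Nat.cast_mul]
  rw [mul_comm (n : ℝ) m, div_pow, pow_succ ((m : ℝ) * n) k]
  have hp : ((m : ℝ) * n) ^ k ≠ 0 := pow_ne_zero _ (mul_ne_zero hm0 hn0)
  have hq : (m : ℝ) * n ≠ 0 := mul_ne_zero hm0 hn0
  generalize ((m : ℝ) * n) ^ k = P at *
  generalize (m : ℝ) * n = S at *
  field_simp
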